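/- arXiv:1507.04073 — 5 statements merged into one kernel-verified Lean document; each statement's English description precedes it below -/
import Mathlib

section
/- Let A = [a_1, ..., a_n] be an m×n real matrix and let ρ(A) := max_{z ∈ ℝ^m, ‖z‖₂=1} min_{i=1,...,n} ⟨a_i, z⟩. If ρ(A) > 0, then ρ(A) = min{‖y‖₂ : y ∈ conv{a_1,...,a_n}}. -/
open scoped RealInnerProductSpace BigOperators

/- For a unit vector `z`, the functional `⟪·, z⟫` is at most the norm, and its minimum over the
convex hull is attained at a generator, so `min_i ⟪a_i, z⟫ ≤ ‖y‖` for every `y` in the hull.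
Equality is reached at the projection `v` of the origin onto the hull: its variational inequality
says that the hull lies in the half-space `‖v‖ ^ 2 ≤ ⟪·, v⟫`, so if `v ≠ 0` then `z = v / ‖v‖`
gives `‖v‖ ≤ min_i ⟪a_i, z⟫`, while for `v = 0` the bound `‖v‖ ≤ ρ` only says `0 ≤ ρ`. -/

section

variable {ι E : Type*} [NormedAddCommGroup E] [InnerProductSpace ℝ E]

theorem iInf_inner_le_inner_of_mem_convexHull {a : ι → E} {y z : E}
    (hbdd : BddBelow (Set.range fun i => ⟪a i, z⟫)) (hy : y ∈ convexHull ℝ (Set.range a)) :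
    ⨅ i, ⟪a i, z⟫ ≤ ⟪y, z⟫ := by
  have hconcave : ConcaveOn ℝ Set.univ fun x : E => ⟪x, z⟫ :=
    (innerSLFlip (𝕜 := ℝ) z).toLinearMap.concaveOn convex_univ
  obtain ⟨_, ⟨i, rfl⟩, hi⟩ := hconcave.exists_le_of_mem_convexHull (Set.subset_univ _) hy
  exact (ciInf_le hbdd i).trans hi

theorem bddBelow_range_inner {a : ι → E} (ha : Bornology.IsBounded (Set.range a)) (z : E) :
    BddBelow (Set.range fun i => ⟪a i, z⟫) := by
  have himage : Bornology.IsBounded (innerSLFlip (𝕜 := ℝ) z '' Set.range a) :=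
    (innerSLFlip (𝕜 := ℝ) z).lipschitz.isBounded_image ha
  rw [← Set.range_comp] at himage
  exact himage.bddBelow

theorem exists_mem_forall_norm_sq_le_inner {K : Set E} (hne : K.Nonempty) (hcomplete : IsComplete K)
    (hconvex : Convex ℝ K) : ∃ v ∈ K, ∀ x ∈ K, ‖v‖ ^ 2 ≤ ⟪x, v⟫ := by
  obtain ⟨v, hv, hmin⟩ := exists_norm_eq_iInf_of_complete_convex hne hcomplete hconvex 0
  refine ⟨v, hv, fun x hx => ?_⟩
  have hvar : ⟪0 - v, x - v⟫ ≤ 0 := (norm_eq_iInf_iff_real_inner_le_zero hconvex hv).1 hmin x hx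
  rw [zero_sub, inner_neg_left, inner_sub_right, real_inner_self_eq_norm_sq,
    real_inner_comm] at hvar
  linarith

theorem norm_le_inner_normalize {v x : E} (h : ‖v‖ ^ 2 ≤ ⟪x, v⟫) :
    ‖v‖ ≤ ⟪x, NormedSpace.normalize v⟫ := by
  obtain rfl | hv := eq_or_ne v 0
  · simp
  · rw [NormedSpace.normalize, real_inner_smul_right, inv_mul_eq_div,
      le_div_iff₀ (norm_pos_iff.2 hv), ← sq]
    exact h

theorem stmt0_general [Nonempty ι] {a : ι → E} {ρ : ℝ} (hbdd : Bornology.IsBounded (Set.range a))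
    (hcomplete : IsComplete (convexHull ℝ (Set.range a)))
    (hρ : IsGreatest {t : ℝ | ∃ z : E, ‖z‖ = 1 ∧ t = ⨅ i, ⟪a i, z⟫} ρ) (hρ_nonneg : 0 ≤ ρ) :
    IsLeast {r : ℝ | ∃ y ∈ convexHull ℝ (Set.range a), r = ‖y‖} ρ := by
  obtain ⟨⟨z, hz, rfl⟩, hmax⟩ := hρ
  have hlower : ∀ y ∈ convexHull ℝ (Set.range a), ⨅ i, ⟪a i, z⟫ ≤ ‖y‖ := fun y hy =>
    calc ⨅ i, ⟪a i, z⟫ ≤ ⟪y, z⟫ :=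
          iInf_inner_le_inner_of_mem_convexHull (bddBelow_range_inner hbdd z) hy
      _ ≤ ‖y‖ * ‖z‖ := real_inner_le_norm y z
      _ = ‖y‖ := by rw [hz, mul_one]
  obtain ⟨v, hv, hvar⟩ := exists_mem_forall_norm_sq_le_inner (Set.range_nonempty a).convexHull
    hcomplete (convex_convexHull ℝ _)
  have hupper : ‖v‖ ≤ ⨅ i, ⟪a i, z⟫ := by
    obtain rfl | hv_ne := eq_or_ne v 0
    · rwa [norm_zero]
    · calc ‖v‖ ≤ ⨅ i, ⟪a i, NormedSpace.normalize v⟫ := le_ciInf fun i =>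
            norm_le_inner_normalize (hvar (a i) (subset_convexHull ℝ _ (Set.mem_range_self i)))
        _ ≤ ⨅ i, ⟪a i, z⟫ := hmax ⟨_, NormedSpace.norm_normalize hv_ne, rfl⟩
  refine ⟨⟨v, hv, (hlower v hv).antisymm hupper⟩, ?_⟩
  rintro _ ⟨y, hy, rfl⟩
  exact hlower y hy

end

/-- If ρ(A) := max_{‖z‖=1} min_i ⟪a_i, z⟫ is positive, then
ρ(A) = min {‖y‖ : y ∈ conv{a_1,…,a_n}}. -/
theorem stmt0 (m n : ℕ) (hn : 0 < n) (a : Fin n → EuclideanSpace ℝ (Fin m)) (ρ : ℝ)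
    (hρ : IsGreatest
      {t : ℝ | ∃ z : EuclideanSpace ℝ (Fin m), ‖z‖ = 1 ∧ t = ⨅ i : Fin n, ⟪a i, z⟫} ρ)
    (hρpos : 0 < ρ) :
    IsLeast {r : ℝ | ∃ y ∈ convexHull ℝ (Set.range a), r = ‖y‖} ρ := by
  have : Nonempty (Fin n) := Fin.pos_iff_nonempty.1 hn
  exact stmt0_general (Set.finite_range a).isBounded
    ((Set.finite_range a).isCompact_convexHull ℝ).isComplete hρ hρpos.le
end

section
/- Let A = [a_1, ..., a_n] be an m×n real matrix and let ρ(A) := max_{z ∈ ℝ^m, ‖z‖₂=1} min_{i=1,...,n} ⟨a_i, z⟩. Then ρ(A) > 0 if and only if 0 ∉ conv{a_1,...,a_n}, and ρ(A) < 0 if and only if 0 lies in the interior of conv{a_1,...,a_n}. Moreover, |ρ(A)| equals the Euclidean distance from the origin to the topological boundary of conv{a_1,...,a_n}. -/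
open scoped RealInnerProductSpace BigOperators

/-!
`ρ` is the signed distance from the origin to the boundary of the convex set `K = conv(A)`,
positive outside `K`. If `0 ∉ K`, the unit vector towards the point of `K` nearest to the origin
is an optimal direction `z`, so `ρ` is the distance from `0` to `K`. If `0 ∈ K`, then `-ρ` is the
distance from `0` to `Kᶜ`: separating a point `y ∉ K` from `K` gives a direction `z` with
`-‖y‖ ≤ ⟪y, z⟫ ≤ ρ`, while `K` lies on one side of the hyperplane `⟪·, z⟫ = ρ` for an optimal `z`,
so the point `ρ • z` of that hyperplane is not interior to `K`. Finally, the distance from a point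
to a set not containing it is also its distance to the boundary of that set, and `K` and `Kᶜ` have
the same boundary.
-/

open Metric

section Frontier

theorem inter_frontier_nonempty_of_isPreconnected {X : Type*} [TopologicalSpace X] {s t : Set X}
    (ht : IsPreconnected t) (hts : (t ∩ s).Nonempty) (htsc : (t ∩ sᶜ).Nonempty) :
    (t ∩ frontier s).Nonempty := by
  by_contra hempty
  have hdisj : t ⊆ (frontier s)ᶜ := fun x hxt hx ↦ hempty ⟨x, hxt, hx⟩
  obtain ⟨x, hxt, hxs⟩ := hts
  obtain ⟨y, hyt, hys⟩ := htsc
  have hx : x ∈ interior s := self_sdiff_frontier s ▸ ⟨hxs, hdisj hxt⟩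
  have hy : y ∈ interior sᶜ := self_sdiff_frontier sᶜ ▸ ⟨hys, frontier_compl s ▸ hdisj hyt⟩
  have hcover : t ⊆ interior s ∪ interior sᶜ :=
    hdisj.trans_eq compl_frontier_eq_union_interior
  obtain ⟨w, -, hws, hwsc⟩ := ht _ _ isOpen_interior isOpen_interior hcover
    ⟨x, hxt, hx⟩ ⟨y, hyt, hy⟩
  exact interior_subset hwsc (interior_subset hws)

variable {E : Type*} [SeminormedAddCommGroup E] [NormedSpace ℝ E] {s : Set E} {x y : E}

theorem exists_mem_frontier_dist_le (hx : x ∉ s) (hy : y ∈ s) :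
    ∃ w ∈ frontier s, dist x w ≤ dist x y := by
  obtain ⟨w, hw, hws⟩ := inter_frontier_nonempty_of_isPreconnected
    (convex_segment x y).isPreconnected ⟨y, right_mem_segment ℝ x y, hy⟩
    ⟨x, left_mem_segment ℝ x y, hx⟩
  exact ⟨w, hws, mem_closedBall'.1 (segment_subset_closedBall_left x y hw)⟩

theorem infDist_frontier_of_notMem (hx : x ∉ s) : infDist x (frontier s) = infDist x s := by
  rcases s.eq_empty_or_nonempty with rfl | ⟨y₀, hy₀⟩
  · rw [frontier_empty]
  apply le_antisymm
  · refine (le_infDist ⟨y₀, hy₀⟩).2 fun y hy ↦ ?_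
    obtain ⟨w, hw, hxw⟩ := exists_mem_frontier_dist_le hx hy
    exact (infDist_le_dist_of_mem hw).trans hxw
  · obtain ⟨w, hw, -⟩ := exists_mem_frontier_dist_le hx hy₀
    rw [← infDist_closure (s := s)]
    exact infDist_le_infDist_of_subset frontier_subset_closure ⟨w, hw⟩

theorem infDist_frontier_of_mem (hx : x ∈ s) : infDist x (frontier s) = infDist x sᶜ := by
  rw [← frontier_compl, infDist_frontier_of_notMem (Set.notMem_compl_iff.2 hx)]

end Frontier

theorem lowerBounds_convexHull {𝕜 : Type*} [Semiring 𝕜] [PartialOrder 𝕜] {M : Type*}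
    [AddCommMonoid M] [PartialOrder M] [IsOrderedAddMonoid M] [Module 𝕜 M] [PosSMulMono 𝕜 M]
    (s : Set M) : lowerBounds (convexHull 𝕜 s) = lowerBounds s :=
  Set.ext fun t ↦ (convex_Ici t).convexHull_subset_iff

variable {E : Type*} [NormedAddCommGroup E] [InnerProductSpace ℝ E] {K : Set E} {t ρ : ℝ}

section Inner

variable {x y z : E}

theorem lt_inner_of_mem_interior (hz : z ≠ 0) (hK : ∀ x ∈ K, t ≤ ⟪x, z⟫) (hx : x ∈ interior K) :
    t < ⟪x, z⟫ := by
  have hopen : IsOpenMap (innerSL ℝ z) :=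
    (innerSL ℝ z).isOpenMap_of_ne_zero fun h ↦ hz (inner_self_eq_zero.1 (DFunLike.congr_fun h z))
  have hKt : K ⊆ innerSL ℝ z ⁻¹' Set.Ici t := fun y hy ↦
    (hK y hy).trans_eq (real_inner_comm z y)
  have hxt := interior_mono hKt hx
  rw [← hopen.preimage_interior_eq_interior_preimage (innerSL ℝ z).continuous,
    interior_Ici] at hxt
  exact lt_of_lt_of_eq hxt (real_inner_comm x z)

theorem exists_unit_inner_add_infDist_le (hK : Convex ℝ K) (hKc : IsComplete K)
    (hne : K.Nonempty) (hy : y ∉ K) :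
    ∃ z : E, ‖z‖ = 1 ∧ ∀ x ∈ K, ⟪y, z⟫ + infDist y K ≤ ⟪x, z⟫ := by
  obtain ⟨p, hp, hpy⟩ := exists_norm_eq_iInf_of_complete_convex hne hKc hK y
  have hobtuse := (norm_eq_iInf_iff_real_inner_le_zero hK hp).1 hpy
  have hpy0 : p - y ≠ 0 := sub_ne_zero.2 fun h ↦ hy (h ▸ hp)
  refine ⟨‖p - y‖⁻¹ • (p - y), NormedSpace.norm_normalize hpy0, fun x hx ↦ ?_⟩
  have hdist : infDist y K ≤ ‖p - y‖ := dist_eq_norm' y p ▸ infDist_le_dist_of_mem hp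
  have hpz : ⟪p - y, ‖p - y‖⁻¹ • (p - y)⟫ = ‖p - y‖ := by
    rw [real_inner_smul_right, real_inner_self_eq_norm_mul_norm,
      inv_mul_cancel_left₀ (norm_ne_zero_iff.2 hpy0)]
  have hxp : 0 ≤ ⟪x - p, ‖p - y‖⁻¹ • (p - y)⟫ := by
    rw [real_inner_smul_right, real_inner_comm, ← neg_sub y p, inner_neg_left]
    exact mul_nonneg (by positivity) (neg_nonneg.2 (hobtuse x hx))
  rw [inner_sub_left] at hpz hxp
  linarith

theorem isGLB_image_inner_convexHull {s : Set E} :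
    IsGLB ((⟪·, z⟫) '' convexHull ℝ s) t ↔ IsGLB ((⟪·, z⟫) '' s) t := by
  have himage : (⟪·, z⟫) '' convexHull ℝ s = convexHull ℝ ((⟪·, z⟫) '' s) :=
    ((innerₗ E).flip z).image_convexHull s
  rw [IsGLB, IsGLB, himage, lowerBounds_convexHull]

end Inner

/-- `ρ` is the condition measure of the set `K`: the maximum over unit vectors `z` of the infimum of
`⟪x, z⟫` over `x ∈ K`. For `K` the set of columns of a matrix `A` this is `ρ(A)`. Stating the
infimum as `IsGLB` discards the directions in which `K` is unbounded below. -/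
def IsConditionMeasure (K : Set E) (ρ : ℝ) : Prop :=
  IsGreatest {t | ∃ z : E, ‖z‖ = 1 ∧ IsGLB ((⟪·, z⟫) '' K) t} ρ

theorem isConditionMeasure_convexHull :
    IsConditionMeasure (convexHull ℝ K) ρ ↔ IsConditionMeasure K ρ := by
  simp only [IsConditionMeasure, isGLB_image_inner_convexHull]

theorem isConditionMeasure_range_iff {ι : Type*} [Finite ι] [Nonempty ι] {a : ι → E} :
    IsConditionMeasure (Set.range a) ρ ↔
      IsGreatest {t | ∃ z : E, ‖z‖ = 1 ∧ t = ⨅ i, ⟪a i, z⟫} ρ := by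
  have hglb (z : E) (t : ℝ) : IsGLB ((⟪·, z⟫) '' Set.range a) t ↔ t = ⨅ i, ⟪a i, z⟫ := by
    have h : IsGLB (Set.range fun i ↦ ⟪a i, z⟫) (⨅ i, ⟪a i, z⟫) :=
      isGLB_ciInf (Set.finite_range _).bddBelow
    rw [← Set.range_comp]
    exact ⟨fun ht ↦ ht.unique h, fun ht ↦ ht ▸ h⟩
  simp only [IsConditionMeasure, hglb]

namespace IsConditionMeasure

theorem nonempty (hρ : IsConditionMeasure K ρ) : K.Nonempty := by
  obtain ⟨⟨z, -, hglb⟩, -⟩ := hρ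
  exact hglb.nonempty.of_image

theorem exists_unit_forall_le_inner (hρ : IsConditionMeasure K ρ) :
    ∃ z : E, ‖z‖ = 1 ∧ ∀ x ∈ K, ρ ≤ ⟪x, z⟫ := by
  obtain ⟨⟨z, hz, hglb⟩, -⟩ := hρ
  exact ⟨z, hz, fun x hx ↦ hglb.1 (Set.mem_image_of_mem _ hx)⟩

theorem le_of_forall_le_inner (hρ : IsConditionMeasure K ρ) {z : E} (hz : ‖z‖ = 1)
    (ht : ∀ x ∈ K, t ≤ ⟪x, z⟫) : t ≤ ρ := by
  have ht' : t ∈ lowerBounds ((⟪·, z⟫) '' K) := Set.forall_mem_image.2 ht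
  have hglb := isGLB_csInf (hρ.nonempty.image (⟪·, z⟫)) ⟨t, ht'⟩
  exact (hglb.2 ht').trans (hρ.2 ⟨z, hz, hglb⟩)

theorem le_norm (hρ : IsConditionMeasure K ρ) {x : E} (hx : x ∈ K) : ρ ≤ ‖x‖ := by
  obtain ⟨z, hz, hKz⟩ := hρ.exists_unit_forall_le_inner
  calc ρ ≤ ⟪x, z⟫ := hKz x hx
    _ ≤ ‖x‖ * ‖z‖ := real_inner_le_norm x z
    _ = ‖x‖ := by rw [hz, mul_one]

theorem infDist_sub_norm_le (hρ : IsConditionMeasure K ρ) (hK : Convex ℝ K) (hKc : IsComplete K)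
    {y : E} (hy : y ∉ K) : infDist y K - ‖y‖ ≤ ρ := by
  obtain ⟨z, hz, hsep⟩ := exists_unit_inner_add_infDist_le hK hKc hρ.nonempty hy
  have hyz : -‖y‖ ≤ ⟪y, z⟫ := by
    simpa [hz] using neg_le_of_abs_le (abs_real_inner_le_norm y z)
  linarith [hρ.le_of_forall_le_inner hz hsep]

theorem exists_unit_forall_interior_lt_inner (hρ : IsConditionMeasure K ρ) :
    ∃ z : E, ‖z‖ = 1 ∧ ∀ x ∈ interior K, ρ < ⟪x, z⟫ := by
  obtain ⟨z, hz, hKz⟩ := hρ.exists_unit_forall_le_inner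
  have hz0 : z ≠ 0 := norm_ne_zero_iff.1 (hz ▸ one_ne_zero)
  exact ⟨z, hz, fun x hx ↦ lt_inner_of_mem_interior hz0 hKz hx⟩

theorem exists_unit_smul_notMem_interior (hρ : IsConditionMeasure K ρ) :
    ∃ z : E, ‖z‖ = 1 ∧ ρ • z ∉ interior K := by
  obtain ⟨z, hz, hlt⟩ := hρ.exists_unit_forall_interior_lt_inner
  refine ⟨z, hz, fun hmem ↦ (hlt _ hmem).ne' ?_⟩
  rw [real_inner_smul_left, real_inner_self_eq_norm_sq, hz, one_pow, mul_one]

theorem infDist_eq (hρ : IsConditionMeasure K ρ) (hK : Convex ℝ K) (hKc : IsComplete K)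
    (h0 : (0 : E) ∉ K) : infDist 0 K = ρ := by
  apply le_antisymm
  · simpa using hρ.infDist_sub_norm_le hK hKc h0
  · refine (le_infDist hρ.nonempty).2 fun x hx ↦ ?_
    rw [dist_zero_left]
    exact hρ.le_norm hx

theorem infDist_compl_eq (hρ : IsConditionMeasure K ρ) (hK : Convex ℝ K) (hKc : IsComplete K)
    (h0 : (0 : E) ∈ K) : infDist 0 Kᶜ = -ρ := by
  have hρ0 : ρ ≤ 0 := norm_zero (E := E) ▸ hρ.le_norm h0
  obtain ⟨z, hz, hmem⟩ := hρ.exists_unit_smul_notMem_interior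
  rw [← Set.mem_compl_iff, ← closure_compl] at hmem
  apply le_antisymm
  · calc infDist 0 Kᶜ = infDist 0 (closure Kᶜ) := infDist_closure.symm
      _ ≤ dist 0 (ρ • z) := infDist_le_dist_of_mem hmem
      _ = -ρ := by rw [dist_zero_left, norm_smul, hz, mul_one, Real.norm_of_nonpos hρ0]
  · refine (le_infDist (closure_nonempty_iff.1 ⟨_, hmem⟩)).2 fun y hy ↦ ?_
    rw [dist_zero_left]
    linarith [hρ.infDist_sub_norm_le hK hKc hy, infDist_nonneg (x := y) (s := K)]

theorem pos_iff (hρ : IsConditionMeasure K ρ) (hK : Convex ℝ K) (hKc : IsComplete K) :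
    0 < ρ ↔ (0 : E) ∉ K := by
  refine ⟨fun hpos h0 ↦ ?_, fun h0 ↦ ?_⟩
  · exact hpos.not_ge (norm_zero (E := E) ▸ hρ.le_norm h0)
  · rw [← hρ.infDist_eq hK hKc h0]
    exact (hKc.isClosed.notMem_iff_infDist_pos hρ.nonempty).1 h0

theorem neg_iff (hρ : IsConditionMeasure K ρ) (hK : Convex ℝ K) (hKc : IsComplete K) :
    ρ < 0 ↔ (0 : E) ∈ interior K := by
  constructor
  · intro hneg
    have h0 : (0 : E) ∈ K := not_not.1 (mt (hρ.pos_iff hK hKc).2 hneg.not_gt)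
    by_contra hint
    rw [← Set.mem_compl_iff, ← closure_compl] at hint
    linarith [hρ.infDist_compl_eq hK hKc h0, infDist_zero_of_mem_closure hint]
  · intro hint
    obtain ⟨z, -, hlt⟩ := hρ.exists_unit_forall_interior_lt_inner
    simpa only [inner_zero_left] using hlt 0 hint

theorem abs_eq_infDist_frontier (hρ : IsConditionMeasure K ρ) (hK : Convex ℝ K)
    (hKc : IsComplete K) : |ρ| = infDist 0 (frontier K) := by
  by_cases h0 : (0 : E) ∈ K
  · rw [infDist_frontier_of_mem h0, hρ.infDist_compl_eq hK hKc h0,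
      abs_of_nonpos (not_lt.1 fun hpos ↦ (hρ.pos_iff hK hKc).1 hpos h0)]
  · rw [infDist_frontier_of_notMem h0, hρ.infDist_eq hK hKc h0,
      abs_of_pos ((hρ.pos_iff hK hKc).2 h0)]

end IsConditionMeasure

theorem stmt2_general {E : Type*} [NormedAddCommGroup E] [InnerProductSpace ℝ E] {K : Set E}
    {ρ : ℝ} (hK : Convex ℝ K) (hKc : IsComplete K) (hρ : IsConditionMeasure K ρ) :
    (0 < ρ ↔ (0 : E) ∉ K) ∧ (ρ < 0 ↔ (0 : E) ∈ interior K) ∧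
      |ρ| = infDist (0 : E) (frontier K) :=
  ⟨hρ.pos_iff hK hKc, hρ.neg_iff hK hKc, hρ.abs_eq_infDist_frontier hK hKc⟩

/-- ρ(A) > 0 iff 0 ∉ conv(A); ρ(A) < 0 iff 0 ∈ int(conv(A));
and |ρ(A)| is the distance from the origin to the boundary of conv(A). -/
theorem stmt2 (m n : ℕ) (hn : 0 < n) (a : Fin n → EuclideanSpace ℝ (Fin m)) (ρ : ℝ)
    (hρ : IsGreatest
      {t : ℝ | ∃ z : EuclideanSpace ℝ (Fin m), ‖z‖ = 1 ∧ t = ⨅ i : Fin n, ⟪a i, z⟫} ρ) :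
    (0 < ρ ↔ (0 : EuclideanSpace ℝ (Fin m)) ∉ convexHull ℝ (Set.range a)) ∧
    (ρ < 0 ↔ (0 : EuclideanSpace ℝ (Fin m)) ∈ interior (convexHull ℝ (Set.range a))) ∧
    |ρ| = Metric.infDist (0 : EuclideanSpace ℝ (Fin m))
            (frontier (convexHull ℝ (Set.range a))) := by
  have : Nonempty (Fin n) := ⟨⟨0, hn⟩⟩
  exact stmt2_general (convex_convexHull ℝ _)
    ((Set.finite_range a).isCompact_convexHull ℝ).isComplete
    (isConditionMeasure_convexHull.2 (isConditionMeasure_range_iff.2 hρ))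
end

section
/- Let A = [a_1, ..., a_n] ∈ ℝ^{m×n} with ‖a_i‖₂ = 1 for all i, and suppose 0 ∈ conv{a_1,...,a_n}. Consider the von Neumann algorithm with away steps: sequences x_k ∈ Δ_{n−1}, y_k = A x_k, where x_0 is a vertex of Δ_{n−1}, and for each k: j minimizes ⟨a_i, y_k⟩ over i ∈ {1,...,n}, ℓ maximizes ⟨a_i, y_k⟩ over i ∈ S(x_k); if ⟨a_j − y_k, y_k⟩ < ⟨y_k − a_ℓ, y_k⟩ set a := a_j − y_k, u := e_j − x_k, θ_max := 1 (regular step), otherwise set a := y_k − a_ℓ, u := x_k − e_ℓ, θ_max := (x_k)_ℓ/(1 − (x_k)_ℓ) (away step); θ_k minimizes ‖y_k + θ a‖₂ over θ ∈ [0, θ_max]; and x_{k+1} := x_k + θ_k u. Then for all k ≥ 1, ‖y_k‖₂² ≤ (1 − w(A)²/16)^{k/2} ‖y_0‖₂². -/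
open scoped RealInnerProductSpace BigOperators

/-- `comb a x = A x`, the combination `∑ i, x i • a i` of the columns `a i` of `A`. -/
noncomputable def comb {m n : ℕ} (a : Fin n → EuclideanSpace ℝ (Fin m)) (x : Fin n → ℝ) :
    EuclideanSpace ℝ (Fin m) := ∑ i, x i • a i

/-- The relative width
`w(A) = min_{x ≥ 0, Ax ≠ 0} max {⟪Ax, a ℓ - a j⟫ / ‖Ax‖ : ℓ ∈ S(x), j ∈ {1,…,n}}`. -/
noncomputable def relWidth {m n : ℕ} (a : Fin n → EuclideanSpace ℝ (Fin m)) : ℝ :=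
  sInf {t : ℝ | ∃ x : Fin n → ℝ, (∀ i, 0 ≤ x i) ∧ comb a x ≠ 0 ∧
    t = sSup {s : ℝ | ∃ ℓ j : Fin n, 0 < x ℓ ∧
      s = ⟪comb a x, a ℓ - a j⟫ / ‖comb a x‖}}

/-- One iteration of the von Neumann algorithm with away steps, mapping `x k` to `x (k+1)`:
`j` minimizes `⟪a i, y k⟫`, `ℓ` maximizes `⟪a i, y k⟫` over the support of `x k`; a regular
step (`d = a j - y k`, `u = e j - x k`, `θmax = 1`) is taken when
`⟪a j - y k, y k⟫ < ⟪y k - a ℓ, y k⟫`, otherwise an away step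
(`d = y k - a ℓ`, `u = x k - e ℓ`, `θmax = (x k) ℓ / (1 - (x k) ℓ)`);
`θ` minimizes `‖y k + θ • d‖` over `[0, θmax]` and `x (k+1) = x k + θ • u`. -/
def VNAwayStep {m n : ℕ} (a : Fin n → EuclideanSpace ℝ (Fin m))
    (x x' : Fin n → ℝ) (y : EuclideanSpace ℝ (Fin m)) : Prop :=
  ∃ (j ℓ : Fin n) (d : EuclideanSpace ℝ (Fin m)) (u : Fin n → ℝ) (θmax θ : ℝ),
    (∀ i, ⟪a j, y⟫ ≤ ⟪a i, y⟫) ∧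
    0 < x ℓ ∧ (∀ i, 0 < x i → ⟪a i, y⟫ ≤ ⟪a ℓ, y⟫) ∧
    ((⟪a j - y, y⟫ < ⟪y - a ℓ, y⟫ ∧
        d = a j - y ∧ u = Pi.single j 1 - x ∧ θmax = 1) ∨
     (¬ (⟪a j - y, y⟫ < ⟪y - a ℓ, y⟫) ∧
        d = y - a ℓ ∧ u = x - Pi.single ℓ 1 ∧ θmax = x ℓ / (1 - x ℓ))) ∧
    0 ≤ θ ∧ θ ≤ θmax ∧
    (∀ θ' : ℝ, 0 ≤ θ' → θ' ≤ θmax → ‖y + θ • d‖ ≤ ‖y + θ' • d‖) ∧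
    x' = x + θ • u

/-!
Write `w` for the relative width and `y = A x`. The inner products of `y` with the regular and the
away direction add up to at most `-w ‖y‖`, so the chosen direction `d` satisfies
`⟪d, y⟫ ≤ -w ‖y‖ / 2`; moreover `‖d‖ ≤ 2`. Moving along `d` by `w ‖y‖ / 8` would therefore decrease
`‖y‖ ^ 2` by at least `w ^ 2 ‖y‖ ^ 2 / 16`. Since `w ≤ 2` and `‖y‖ ≤ 1`, a regular step is never
too short for that. An away step that is too short is a full step, and removes `e_ℓ` from the
support of `x`. As every step enlarges the support by at most one point and the support is never
empty, at least half of the steps starting from a vertex contract `‖y‖ ^ 2` by the factor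
`1 - w ^ 2 / 16`.
-/

section LineSearch

variable {E : Type*} [NormedAddCommGroup E] [InnerProductSpace ℝ E] {y d : E} {p D θ T : ℝ}

lemma norm_add_smul_sq (y d : E) (t : ℝ) :
    ‖y + t • d‖ ^ 2 = ‖y‖ ^ 2 + 2 * t * ⟪d, y⟫ + t ^ 2 * ‖d‖ ^ 2 := by
  rw [norm_add_sq_real, inner_smul_right, norm_smul, mul_pow, Real.norm_eq_abs, sq_abs,
    real_inner_comm]
  ring

lemma norm_add_smul_sq_le (hinner : ⟪d, y⟫ ≤ -p) (hd : ‖d‖ ≤ D) (hp : 0 ≤ p) (hD : 0 < D) :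
    ‖y + (p / D ^ 2) • d‖ ^ 2 ≤ ‖y‖ ^ 2 - p ^ 2 / D ^ 2 :=
  calc ‖y + (p / D ^ 2) • d‖ ^ 2
      = ‖y‖ ^ 2 + 2 * (p / D ^ 2) * ⟪d, y⟫ + (p / D ^ 2) ^ 2 * ‖d‖ ^ 2 := norm_add_smul_sq ..
    _ ≤ ‖y‖ ^ 2 + 2 * (p / D ^ 2) * -p + (p / D ^ 2) ^ 2 * D ^ 2 := by gcongr
    _ = ‖y‖ ^ 2 - p ^ 2 / D ^ 2 := by field_simp; ring

lemma strictAntiOn_norm_add_smul_sq (hinner : ⟪d, y⟫ ≤ -p) (hd : ‖d‖ ≤ D) (hD : 0 < D) :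
    StrictAntiOn (fun t : ℝ => ‖y + t • d‖ ^ 2) (Set.Icc 0 (p / D ^ 2)) := by
  intro s hs t ht hst
  have hst_lt : s + t < p / D ^ 2 + p / D ^ 2 := by linarith [ht.2]
  have hsum : (s + t) * ‖d‖ ^ 2 < 2 * p :=
    calc (s + t) * ‖d‖ ^ 2
        ≤ (s + t) * D ^ 2 := by gcongr; linarith [hs.1, ht.1]
      _ < (p / D ^ 2 + p / D ^ 2) * D ^ 2 := by gcongr
      _ = 2 * p := by field_simp; ring
  have hfactor : ‖y + t • d‖ ^ 2 - ‖y + s • d‖ ^ 2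
      = (t - s) * (2 * ⟪d, y⟫ + (s + t) * ‖d‖ ^ 2) := by
    rw [norm_add_smul_sq, norm_add_smul_sq]
    ring
  have hneg : (t - s) * (2 * ⟪d, y⟫ + (s + t) * ‖d‖ ^ 2) < 0 :=
    mul_neg_of_pos_of_neg (by linarith) (by linarith)
  exact sub_neg.1 (hfactor ▸ hneg)

lemma norm_add_smul_sq_le_of_isMinOn (hinner : ⟪d, y⟫ ≤ -p) (hd : ‖d‖ ≤ D) (hp : 0 ≤ p)
    (hD : 0 < D) (hmin : IsMinOn (fun t : ℝ => ‖y + t • d‖) (Set.Icc 0 T) θ)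
    (hT : p / D ^ 2 ≤ T) :
    ‖y + θ • d‖ ^ 2 ≤ ‖y‖ ^ 2 - p ^ 2 / D ^ 2 :=
  calc ‖y + θ • d‖ ^ 2
      ≤ ‖y + (p / D ^ 2) • d‖ ^ 2 := by
        gcongr
        exact isMinOn_iff.1 hmin _ ⟨by positivity, hT⟩
    _ ≤ ‖y‖ ^ 2 - p ^ 2 / D ^ 2 := norm_add_smul_sq_le hinner hd hp hD

lemma eq_right_of_isMinOn_norm_add_smul (hinner : ⟪d, y⟫ ≤ -p) (hd : ‖d‖ ≤ D) (hD : 0 < D)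
    (hθ : θ ∈ Set.Icc 0 T) (hmin : IsMinOn (fun t : ℝ => ‖y + t • d‖) (Set.Icc 0 T) θ)
    (hT : T ≤ p / D ^ 2) :
    θ = T := by
  have hT0 : 0 ≤ T := hθ.1.trans hθ.2
  by_contra hne
  have hlt : ‖y + T • d‖ ^ 2 < ‖y + θ • d‖ ^ 2 :=
    strictAntiOn_norm_add_smul_sq hinner hd hD ⟨hθ.1, hθ.2.trans hT⟩ ⟨hT0, hT⟩
      (hθ.2.lt_of_ne hne)
  exact (lt_of_pow_lt_pow_left₀ 2 (norm_nonneg _) hlt).not_ge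
    (isMinOn_iff.1 hmin T ⟨hT0, le_rfl⟩)

end LineSearch

section Simplex

variable {ι : Type*} [Fintype ι]

/-- The support `S(x)` of a nonnegative vector, encoded for arbitrary real vectors as the set of
strictly positive coordinates. -/
noncomputable def posSupport (x : ι → ℝ) : Finset ι := {i | 0 < x i}

variable {x : ι → ℝ}

lemma mem_posSupport {i : ι} : i ∈ posSupport x ↔ 0 < x i := by
  simp [posSupport]

variable [DecidableEq ι] {j l : ι} {θ : ℝ}

lemma posSupport_single (i : ι) : posSupport (Pi.single i 1 : ι → ℝ) = {i} := by
  ext k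
  by_cases hk : k = i <;> simp [mem_posSupport, hk]

lemma eq_single_of_mem_stdSimplex (hx : x ∈ stdSimplex ℝ ι) (hl : x l = 1) :
    x = Pi.single l 1 := by
  have hle : ∀ i ∈ Finset.univ, (Pi.single l 1 : ι → ℝ) i ≤ x i := by
    intro i _
    by_cases hi : i = l
    · rw [hi, Pi.single_eq_same, hl]
    · rw [Pi.single_eq_of_ne hi]
      exact hx.1 i
  have hsum : ∑ i, (Pi.single l 1 : ι → ℝ) i = ∑ i, x i := by
    rw [hx.2, (single_mem_stdSimplex ℝ l).2]
  exact (funext fun i => (Finset.sum_eq_sum_iff_of_le hle).1 hsum i (Finset.mem_univ i)).symm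

lemma card_posSupport_add_smul_single_sub_le (hx : ∀ i, 0 ≤ x i) :
    (posSupport (x + θ • (Pi.single j 1 - x))).card ≤ (posSupport x).card + 1 := by
  refine (Finset.card_le_card fun i hi => ?_).trans (Finset.card_insert_le j (posSupport x))
  rw [Finset.mem_insert, or_iff_not_imp_left, mem_posSupport]
  intro hij
  refine (hx i).lt_of_ne' fun hxi => ?_
  simp [mem_posSupport, hij, hxi] at hi

lemma add_smul_sub_single_mem_stdSimplex (hx : x ∈ stdSimplex ℝ ι) (hθ : 0 ≤ θ)
    (hl : θ * (1 - x l) ≤ x l) :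
    x + θ • (x - Pi.single l 1) ∈ stdSimplex ℝ ι := by
  refine ⟨fun i => ?_, ?_⟩
  · by_cases hi : i = l
    · subst hi
      simp only [Pi.add_apply, Pi.smul_apply, Pi.sub_apply, Pi.single_eq_same, smul_eq_mul]
      linarith
    · have := hx.1 i
      simp only [Pi.add_apply, Pi.smul_apply, Pi.sub_apply, Pi.single_eq_of_ne hi, sub_zero,
        smul_eq_mul]
      positivity
  · simp [Finset.sum_add_distrib, ← Finset.mul_sum, hx.2]

lemma posSupport_add_smul_sub_single_subset (hx : ∀ i, 0 ≤ x i) (hθ : 0 ≤ θ) :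
    posSupport (x + θ • (x - Pi.single l 1)) ⊆ posSupport x := by
  intro i hi
  rw [mem_posSupport] at hi ⊢
  refine (hx i).lt_of_ne' fun hxi => hi.not_ge ?_
  have hsingle : 0 ≤ θ * (Pi.single l 1 : ι → ℝ) i :=
    mul_nonneg hθ ((single_mem_stdSimplex ℝ l).1 i)
  simpa [hxi] using hsingle

lemma card_posSupport_add_smul_sub_single_lt (hx : ∀ i, 0 ≤ x i) (hθ : 0 ≤ θ) (hl : 0 < x l)
    (hdrop : θ * (1 - x l) = x l) :
    (posSupport (x + θ • (x - Pi.single l 1))).card < (posSupport x).card := by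
  refine Finset.card_lt_card <|
    (Finset.ssubset_iff_of_subset (posSupport_add_smul_sub_single_subset hx hθ)).2
      ⟨l, mem_posSupport.2 hl, fun hmem => (mem_posSupport.1 hmem).ne' ?_⟩
  simp only [Pi.add_apply, Pi.smul_apply, Pi.sub_apply, Pi.single_eq_same, smul_eq_mul]
  linarith

end Simplex

section Contraction

variable {q : ℝ} {f : ℕ → ℝ} {c : ℕ → ℕ}

lemma exists_le_pow_mul_of_contracts_or_drops (hq : 0 ≤ q)
    (h : ∀ k, (f (k + 1) ≤ q * f k ∧ c (k + 1) ≤ c k + 1) ∨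
      (f (k + 1) ≤ f k ∧ c (k + 1) < c k)) (k : ℕ) :
    ∃ N : ℕ, c k + k ≤ c 0 + 2 * N ∧ f k ≤ q ^ N * f 0 := by
  induction k with
  | zero => exact ⟨0, by simp⟩
  | succ k ih =>
    obtain ⟨N, hN, hfk⟩ := ih
    rcases h k with ⟨hf, hc⟩ | ⟨hf, hc⟩
    · refine ⟨N + 1, by omega, hf.trans ?_⟩
      rw [pow_succ', mul_assoc]
      gcongr
    · exact ⟨N, by omega, hf.trans hfk⟩

lemma le_rpow_mul_of_contracts_or_drops (hq : 0 < q) (hq1 : q ≤ 1) (hf0 : 0 ≤ f 0)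
    (h : ∀ k, (f (k + 1) ≤ q * f k ∧ c (k + 1) ≤ c k + 1) ∨
      (f (k + 1) ≤ f k ∧ c (k + 1) < c k)) {k : ℕ} (hk : 0 < c k) :
    f k ≤ q ^ (((k : ℝ) + 1 - c 0) / 2) * f 0 := by
  obtain ⟨N, hN, hfk⟩ := exists_le_pow_mul_of_contracts_or_drops hq.le h k
  have hexp : ((k : ℝ) + 1 - c 0) / 2 ≤ N := by
    have : (k : ℝ) + 1 ≤ c 0 + 2 * N := by exact_mod_cast (by omega : k + 1 ≤ c 0 + 2 * N)
    linarith
  calc f k ≤ q ^ N * f 0 := hfk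
    _ = q ^ (N : ℝ) * f 0 := by rw [Real.rpow_natCast]
    _ ≤ q ^ (((k : ℝ) + 1 - c 0) / 2) * f 0 :=
      mul_le_mul_of_nonneg_right (Real.rpow_le_rpow_of_exponent_ge hq hq1 hexp) hf0

end Contraction

section VonNeumann

variable {m n : ℕ} {a : Fin n → EuclideanSpace ℝ (Fin m)} {x x' : Fin n → ℝ} {j l : Fin n}
  {θ : ℝ}

lemma comb_eq_linearCombination (a : Fin n → EuclideanSpace ℝ (Fin m)) (x : Fin n → ℝ) :
    comb a x = Fintype.linearCombination ℝ a x :=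
  rfl

lemma comb_add_smul (x u : Fin n → ℝ) (t : ℝ) : comb a (x + t • u) = comb a x + t • comb a u := by
  simp only [comb_eq_linearCombination, map_add, map_smul]

lemma comb_sub (x u : Fin n → ℝ) : comb a (x - u) = comb a x - comb a u := by
  simp only [comb_eq_linearCombination, map_sub]

lemma comb_single (i : Fin n) : comb a (Pi.single i 1) = a i := by
  rw [comb_eq_linearCombination, Fintype.linearCombination_apply_single, one_smul]

lemma norm_comb_le {r : ℝ} (ha : ∀ i, ‖a i‖ ≤ r) (hx : x ∈ stdSimplex ℝ (Fin n)) :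
    ‖comb a x‖ ≤ r :=
  mem_closedBall_zero_iff.1 <| (convex_closedBall 0 r).sum_mem (fun i _ => hx.1 i) hx.2
    fun i _ => mem_closedBall_zero_iff.2 (ha i)

/-- The inner maximum in the definition of the relative width: the width of `conv (a)` in the
direction `A x`, seen from the support of `x`. It is `0` if `A x = 0` or no coordinate of `x` is
positive, since `s / 0 = 0` and `sSup ∅ = 0`. -/
noncomputable def directionalWidth (a : Fin n → EuclideanSpace ℝ (Fin m)) (x : Fin n → ℝ) : ℝ :=
  sSup {s : ℝ | ∃ ℓ j : Fin n, 0 < x ℓ ∧ s = ⟪comb a x, a ℓ - a j⟫ / ‖comb a x‖}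

lemma directionalWidth_nonneg (a : Fin n → EuclideanSpace ℝ (Fin m)) (x : Fin n → ℝ) :
    0 ≤ directionalWidth a x := by
  by_cases hpos : ∃ l, 0 < x l
  · obtain ⟨l, hl⟩ := hpos
    exact Real.sSup_nonneg' ⟨0, ⟨l, l, hl, by simp⟩, le_rfl⟩
  · refine Real.sSup_nonneg ?_
    rintro _ ⟨l, -, hl, -⟩
    exact absurd ⟨l, hl⟩ hpos

lemma directionalWidth_le_two (ha : ∀ i, ‖a i‖ ≤ 1) : directionalWidth a x ≤ 2 := by
  refine Real.sSup_le ?_ zero_le_two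
  rintro _ ⟨l, j, -, rfl⟩
  refine div_le_of_le_mul₀ (norm_nonneg _) zero_le_two ?_
  calc ⟪comb a x, a l - a j⟫
      ≤ ‖comb a x‖ * ‖a l - a j‖ := real_inner_le_norm _ _
    _ ≤ ‖comb a x‖ * (1 + 1) := by gcongr; exact norm_sub_le_of_le (ha l) (ha j)
    _ = 2 * ‖comb a x‖ := by ring

lemma directionalWidth_mul_norm_le (hj : ∀ i, ⟪a j, comb a x⟫ ≤ ⟪a i, comb a x⟫) (hl0 : 0 < x l)
    (hl : ∀ i, 0 < x i → ⟪a i, comb a x⟫ ≤ ⟪a l, comb a x⟫) :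
    directionalWidth a x * ‖comb a x‖ ≤ ⟪a l - a j, comb a x⟫ := by
  by_cases hc : comb a x = 0
  · simp [hc]
  rw [← le_div_iff₀ (norm_pos_iff.2 hc)]
  refine csSup_le ⟨_, l, j, hl0, rfl⟩ ?_
  rintro _ ⟨l', j', hl', rfl⟩
  rw [real_inner_comm, inner_sub_left, inner_sub_left]
  gcongr
  · exact hl l' hl'
  · exact hj j'

lemma relWidth_nonneg (a : Fin n → EuclideanSpace ℝ (Fin m)) : 0 ≤ relWidth a := by
  refine Real.sInf_nonneg ?_
  rintro _ ⟨x, -, -, rfl⟩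
  exact directionalWidth_nonneg a x

lemma relWidth_le_directionalWidth (hx : ∀ i, 0 ≤ x i) (hc : comb a x ≠ 0) :
    relWidth a ≤ directionalWidth a x := by
  refine csInf_le ⟨0, ?_⟩ ⟨x, hx, hc, rfl⟩
  rintro _ ⟨z, -, -, rfl⟩
  exact directionalWidth_nonneg a z

lemma relWidth_le_two (ha : ∀ i, ‖a i‖ ≤ 1) : relWidth a ≤ 2 := by
  by_cases hne : ∃ x : Fin n → ℝ, (∀ i, 0 ≤ x i) ∧ comb a x ≠ 0
  · obtain ⟨x, hx, hc⟩ := hne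
    exact (relWidth_le_directionalWidth hx hc).trans (directionalWidth_le_two ha)
  · -- Here the infimum defining `relWidth a` is over the empty set, hence equal to `0`.
    refine (Real.sInf_nonpos ?_).trans zero_le_two
    rintro _ ⟨x, hx, hc, -⟩
    exact absurd ⟨x, hx, hc⟩ hne

lemma inner_toward_add_inner_away_le (hx : ∀ i, 0 ≤ x i)
    (hj : ∀ i, ⟪a j, comb a x⟫ ≤ ⟪a i, comb a x⟫) (hl0 : 0 < x l)
    (hl : ∀ i, 0 < x i → ⟪a i, comb a x⟫ ≤ ⟪a l, comb a x⟫) :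
    ⟪a j - comb a x, comb a x⟫ + ⟪comb a x - a l, comb a x⟫ ≤ -(relWidth a * ‖comb a x‖) := by
  have hwidth : relWidth a * ‖comb a x‖ ≤ ⟪a l - a j, comb a x⟫ := by
    by_cases hc : comb a x = 0
    · simp [hc]
    · exact (mul_le_mul_of_nonneg_right (relWidth_le_directionalWidth hx hc) (norm_nonneg _)).trans
        (directionalWidth_mul_norm_le hj hl0 hl)
  rw [inner_sub_left] at hwidth ⊢
  rw [inner_sub_left]
  linarith

lemma regular_step_contracts (ha : ∀ i, ‖a i‖ ≤ 1) (hx : x ∈ stdSimplex ℝ (Fin n))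
    (hinner : ⟪a j - comb a x, comb a x⟫ ≤ -(relWidth a * ‖comb a x‖ / 2))
    (hmin : IsMinOn (fun t : ℝ => ‖comb a x + t • (a j - comb a x)‖) (Set.Icc 0 1) θ) :
    ‖comb a x + θ • (a j - comb a x)‖ ^ 2 ≤ (1 - relWidth a ^ 2 / 16) * ‖comb a x‖ ^ 2 := by
  have hy : ‖comb a x‖ ≤ 1 := norm_comb_le ha hx
  have hd : ‖a j - comb a x‖ ≤ 2 := (norm_sub_le_of_le (ha j) hy).trans_eq one_add_one_eq_two
  have hw0 := relWidth_nonneg a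
  have hwy : relWidth a * ‖comb a x‖ ≤ 2 * 1 := by
    gcongr
    exact relWidth_le_two ha
  refine (norm_add_smul_sq_le_of_isMinOn hinner hd (by positivity) two_pos hmin
    (by linarith)).trans_eq ?_
  ring

lemma away_step_contracts_or_drops (ha : ∀ i, ‖a i‖ ≤ 1) (hx : x ∈ stdSimplex ℝ (Fin n))
    (hinner : ⟪comb a x - a l, comb a x⟫ ≤ -(relWidth a * ‖comb a x‖ / 2))
    (hθ : θ ∈ Set.Icc 0 (x l / (1 - x l)))
    (hmin : IsMinOn (fun t : ℝ => ‖comb a x + t • (comb a x - a l)‖)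
      (Set.Icc 0 (x l / (1 - x l))) θ) :
    ‖comb a x + θ • (comb a x - a l)‖ ^ 2 ≤ (1 - relWidth a ^ 2 / 16) * ‖comb a x‖ ^ 2 ∨
      θ * (1 - x l) = x l := by
  have hd : ‖comb a x - a l‖ ≤ 2 :=
    (norm_sub_le_of_le (norm_comb_le ha hx) (ha l)).trans_eq one_add_one_eq_two
  have hw0 := relWidth_nonneg a
  rcases le_or_gt (relWidth a * ‖comb a x‖ / 2 / 2 ^ 2) (x l / (1 - x l)) with hlong | hshort
  · left
    refine (norm_add_smul_sq_le_of_isMinOn hinner hd (by positivity) two_pos hmin hlong).trans_eq ?_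
    ring
  · right
    -- If `x l = 1`, then `A x = a l`, so the away direction vanishes and cannot be a descent one.
    have hxl : x l ≠ 1 := by
      intro hxl
      have hy : comb a x = a l := by rw [eq_single_of_mem_stdSimplex hx hxl, comb_single]
      rw [sub_eq_zero.2 hy, inner_zero_left] at hinner
      linarith [hθ.1.trans hθ.2]
    rw [eq_right_of_isMinOn_norm_add_smul hinner hd two_pos hθ hmin hshort.le,
      div_mul_cancel₀ _ (sub_ne_zero.2 hxl.symm)]

namespace VNAwayStep

lemma posSupport_nonempty {y : EuclideanSpace ℝ (Fin m)} (h : VNAwayStep a x x' y) :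
    (posSupport x).Nonempty := by
  obtain ⟨-, l, -, -, -, -, -, hl0, -⟩ := h
  exact ⟨l, mem_posSupport.2 hl0⟩

lemma mem_stdSimplex {y : EuclideanSpace ℝ (Fin m)} (h : VNAwayStep a x x' y)
    (hx : x ∈ stdSimplex ℝ (Fin n)) : x' ∈ stdSimplex ℝ (Fin n) := by
  obtain ⟨j, l, d, u, T, θ, -, hl0, -, hcase, hθ0, hθT, -, rfl⟩ := h
  rcases hcase with ⟨-, -, rfl, rfl⟩ | ⟨-, -, rfl, rfl⟩
  · exact (convex_stdSimplex ℝ (Fin n)).add_smul_sub_mem hx (single_mem_stdSimplex ℝ j) ⟨hθ0, hθT⟩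
  · have hl1 : 0 ≤ 1 - x l := sub_nonneg.2 (mem_Icc_of_mem_stdSimplex hx l).2
    exact add_smul_sub_single_mem_stdSimplex hx hθ0 (mul_le_of_le_div₀ hl0.le hl1 hθT)

lemma norm_comb_le (h : VNAwayStep a x x' (comb a x)) : ‖comb a x'‖ ≤ ‖comb a x‖ := by
  obtain ⟨j, l, d, u, T, θ, -, -, -, hcase, hθ0, hθT, hmin, rfl⟩ := h
  have hu : comb a u = d := by
    rcases hcase with ⟨-, rfl, rfl, -⟩ | ⟨-, rfl, rfl, -⟩ <;> rw [comb_sub, comb_single]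
  rw [comb_add_smul, hu]
  simpa using hmin 0 le_rfl (hθ0.trans hθT)

lemma contracts_or_drops (ha : ∀ i, ‖a i‖ ≤ 1) (hx : x ∈ stdSimplex ℝ (Fin n))
    (h : VNAwayStep a x x' (comb a x)) :
    (‖comb a x'‖ ^ 2 ≤ (1 - relWidth a ^ 2 / 16) * ‖comb a x‖ ^ 2 ∧
        (posSupport x').card ≤ (posSupport x).card + 1) ∨
      (‖comb a x'‖ ^ 2 ≤ ‖comb a x‖ ^ 2 ∧ (posSupport x').card < (posSupport x).card) := by
  have hnorm : ‖comb a x'‖ ^ 2 ≤ ‖comb a x‖ ^ 2 := by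
    gcongr
    exact h.norm_comb_le
  obtain ⟨j, l, d, u, T, θ, hj, hl0, hl, hcase, hθ0, hθT, hmin, rfl⟩ := h
  have hsum := inner_toward_add_inner_away_le hx.1 hj hl0 hl
  have hmin' : IsMinOn (fun t : ℝ => ‖comb a x + t • d‖) (Set.Icc 0 T) θ :=
    isMinOn_iff.2 fun t ht => hmin t ht.1 ht.2
  rcases hcase with ⟨hlt, rfl, rfl, rfl⟩ | ⟨hnlt, rfl, rfl, rfl⟩
  · left
    refine ⟨?_, card_posSupport_add_smul_single_sub_le hx.1⟩
    rw [comb_add_smul, comb_sub, comb_single]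
    exact regular_step_contracts ha hx (by linarith) hmin'
  · rcases away_step_contracts_or_drops ha hx (by linarith) ⟨hθ0, hθT⟩ hmin' with hcontr | hdrop
    · left
      rw [comb_add_smul, comb_sub, comb_single]
      exact ⟨hcontr, (Finset.card_le_card
        (posSupport_add_smul_sub_single_subset hx.1 hθ0)).trans (Nat.le_succ _)⟩
    · exact Or.inr ⟨hnorm, card_posSupport_add_smul_sub_single_lt hx.1 hθ0 hl0 hdrop⟩

end VNAwayStep

end VonNeumann

theorem stmt5_general {m n : ℕ} {a : Fin n → EuclideanSpace ℝ (Fin m)} (ha : ∀ i, ‖a i‖ ≤ 1)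
    {x : ℕ → Fin n → ℝ} {y : ℕ → EuclideanSpace ℝ (Fin m)} (hy : ∀ k, y k = comb a (x k))
    (hx0 : x 0 ∈ stdSimplex ℝ (Fin n))
    (hstep : ∀ k : ℕ, VNAwayStep a (x k) (x (k + 1)) (y k)) (k : ℕ) :
    ‖y k‖ ^ 2 ≤
      (1 - relWidth a ^ 2 / 16) ^ (((k : ℝ) + 1 - (posSupport (x 0)).card) / 2) * ‖y 0‖ ^ 2 := by
  have hx : ∀ k, x k ∈ stdSimplex ℝ (Fin n) := fun k =>
    Nat.rec hx0 (fun i hi => (hstep i).mem_stdSimplex hi) k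
  have hw0 : 0 ≤ relWidth a := relWidth_nonneg a
  have hw2 : relWidth a ≤ 2 := relWidth_le_two ha
  refine le_rpow_mul_of_contracts_or_drops (f := fun k => ‖y k‖ ^ 2)
    (c := fun k => (posSupport (x k)).card) (by nlinarith) (by nlinarith) (sq_nonneg _)
    (fun i => ?_) (hstep k).posSupport_nonempty.card_pos
  simp only [hy] at hstep ⊢
  exact (hstep i).contracts_or_drops ha (hx i)

/-- linear convergence of the von Neumann algorithm with away steps when
`0 ∈ conv(A)`: `‖y k‖² ≤ (1 - w(A)²/16)^(k/2) ‖y 0‖²`. -/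
theorem stmt5 (m n : ℕ) (hn : 0 < n) (a : Fin n → EuclideanSpace ℝ (Fin m))
    (hnorm : ∀ i, ‖a i‖ = 1)
    (h0 : (0 : EuclideanSpace ℝ (Fin m)) ∈ convexHull ℝ (Set.range a))
    (x : ℕ → Fin n → ℝ) (y : ℕ → EuclideanSpace ℝ (Fin m))
    (hy : ∀ k, y k = comb a (x k))
    (hx0 : ∃ i : Fin n, x 0 = Pi.single i 1)
    (hstep : ∀ k : ℕ, VNAwayStep a (x k) (x (k + 1)) (y k)) :
    ∀ k : ℕ, 1 ≤ k →
      ‖y k‖ ^ 2 ≤ (1 - relWidth a ^ 2 / 16) ^ ((k : ℝ) / 2) * ‖y 0‖ ^ 2 := by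
  obtain ⟨i, hi⟩ := hx0
  intro k _
  simpa [hi, posSupport_single] using
    stmt5_general (fun i => (hnorm i).le) hy (hi ▸ single_mem_stdSimplex ℝ i) hstep k
end

section
/- Let Q ∈ ℝ^{m×m} be symmetric positive definite, b ∈ ℝ^m, f(y) := (1/2)⟨y, Qy⟩ + ⟨b, y⟩, and let C ⊆ ℝ^m be a convex set. Suppose y* ∈ C minimizes f over C and y ∈ C with y ≠ y*. Then ⟨∇f(y), y − y*⟩ / ‖y − y*‖_Q ≥ √(2(f(y) − f(y*))), where ‖v‖_Q := √⟨v, Qv⟩. -/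
open scoped RealInnerProductSpace BigOperators

/-!
Twice the gap `f y - f y*` and the squared `Q`-norm of `y - y*` have arithmetic mean
`⟪∇f y, y - y*⟫`, so the bound is the AM-GM inequality for these two nonnegative numbers.
-/

lemma sqrt_mul_sqrt_le_half_add {a b : ℝ} (ha : 0 ≤ a) (hb : 0 ≤ b) :
    √a * √b ≤ (a + b) / 2 := by
  have h : 2 * √a * √b ≤ √a ^ 2 + √b ^ 2 := two_mul_le_add_sq √a √b
  rw [Real.sq_sqrt ha, Real.sq_sqrt hb] at h
  linarith

section QuadraticFunctional

open LinearMap (BilinForm)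

variable {E : Type*} [AddCommGroup E] [Module ℝ E]

/-- The quadratic functional `y ↦ ½ B(y, y) + l(y)` on a real vector space. For symmetric `B` its
gradient at `y` is the linear functional `B y + l`; for `B u v = ⟪u, Q v⟫` and `l = ⟪b, ·⟫` it is
`y ↦ ½ ⟪y, Q y⟫ + ⟪b, y⟫`. -/
noncomputable def quadraticFunctional (B : BilinForm ℝ E) (l : Module.Dual ℝ E) (y : E) : ℝ :=
  1 / 2 * B y y + l y

variable {B : BilinForm ℝ E} {l : Module.Dual ℝ E} {x y : E}

lemma two_mul_quadraticFunctional_sub_add (hB : B.IsSymm) :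
    2 * (quadraticFunctional B l y - quadraticFunctional B l x) + B (y - x) (y - x) =
      2 * (B y + l) (y - x) := by
  have hxy : B x y = B y x := hB.eq x y
  simp only [quadraticFunctional, map_sub, LinearMap.sub_apply, LinearMap.add_apply, hxy]
  ring

lemma sqrt_quadraticFunctional_sub_mul_sqrt_le (hB : B.IsSymm)
    (hle : quadraticFunctional B l x ≤ quadraticFunctional B l y)
    (hnonneg : 0 ≤ B (y - x) (y - x)) :
    √(2 * (quadraticFunctional B l y - quadraticFunctional B l x)) * √(B (y - x) (y - x)) ≤
      (B y + l) (y - x) := by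
  have hgap : 0 ≤ 2 * (quadraticFunctional B l y - quadraticFunctional B l x) := by linarith
  calc
    _ ≤ (2 * (quadraticFunctional B l y - quadraticFunctional B l x) + B (y - x) (y - x)) / 2 :=
      sqrt_mul_sqrt_le_half_add hgap hnonneg
    _ = (B y + l) (y - x) := by
      rw [two_mul_quadraticFunctional_sub_add hB, mul_div_cancel_left₀ _ two_ne_zero]

theorem stmt10_general (hB : B.IsSymm)
    (hle : quadraticFunctional B l x ≤ quadraticFunctional B l y)
    (hpos : 0 < B (y - x) (y - x)) :
    √(2 * (quadraticFunctional B l y - quadraticFunctional B l x)) ≤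
      (B y + l) (y - x) / √(B (y - x) (y - x)) :=
  (le_div_iff₀ (Real.sqrt_pos.2 hpos)).2
    (sqrt_quadraticFunctional_sub_mul_sqrt_le hB hle hpos.le)

end QuadraticFunctional

lemma isSymm_innerₗ_compl₂ {E : Type*} [NormedAddCommGroup E] [InnerProductSpace ℝ E]
    {Q : E →ₗ[ℝ] E} (hQ : Q.IsSymmetric) :
    LinearMap.BilinForm.IsSymm ((innerₗ E).compl₂ Q) :=
  ⟨fun u v => (hQ u v).symm.trans (real_inner_comm v (Q u))⟩

/-- for `f(y) = ½⟪y, Qy⟫ + ⟪b, y⟫` with `Q` symmetric positive definite,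
if `y*` minimizes `f` over a convex set `C` and `y ∈ C`, `y ≠ y*`, then
`⟪∇f(y), y - y*⟫ / ‖y - y*‖_Q ≥ √(2(f(y) - f(y*)))`, where `‖v‖_Q = √⟪v, Qv⟫`. -/
theorem stmt10 (m : ℕ) (Q : EuclideanSpace ℝ (Fin m) →ₗ[ℝ] EuclideanSpace ℝ (Fin m))
    (hsymm : ∀ u v : EuclideanSpace ℝ (Fin m), ⟪Q u, v⟫ = ⟪u, Q v⟫)
    (hpd : ∀ v : EuclideanSpace ℝ (Fin m), v ≠ 0 → 0 < ⟪v, Q v⟫)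
    (b : EuclideanSpace ℝ (Fin m)) (f : EuclideanSpace ℝ (Fin m) → ℝ)
    (hf : ∀ y, f y = 1 / 2 * ⟪y, Q y⟫ + ⟪b, y⟫)
    (C : Set (EuclideanSpace ℝ (Fin m))) (hC : Convex ℝ C)
    (ystar : EuclideanSpace ℝ (Fin m)) (hystar : ystar ∈ C)
    (hmin : ∀ z ∈ C, f ystar ≤ f z)
    (y : EuclideanSpace ℝ (Fin m)) (hyC : y ∈ C) (hne : y ≠ ystar) :
    Real.sqrt (2 * (f y - f ystar)) ≤
      ⟪Q y + b, y - ystar⟫ / Real.sqrt ⟪y - ystar, Q (y - ystar)⟫ := by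
  obtain rfl : f = quadraticFunctional ((innerₗ _).compl₂ Q) (innerₗ _ b) := funext hf
  rw [inner_add_left, hsymm]
  exact stmt10_general (isSymm_innerₗ_compl₂ hsymm) (hmin y hyC) (hpd _ (sub_ne_zero.2 hne))
end

section
/- Let A = [a_1, ..., a_n] ∈ ℝ^{m×n} be nonzero, Q ∈ ℝ^{m×m} symmetric positive definite, b ∈ ℝ^m, f(y) := (1/2)⟨y, Qy⟩ + ⟨b, y⟩. Let x* ∈ Δ_{n−1} minimize f(Ax) over x ∈ Δ_{n−1}, set y* := Ax*, and let Ā := Q^{1/2}[a_1 − y*, ..., a_n − y*]. Then for all x ∈ Δ_{n−1}: max{⟨∇f(Ax), a_ℓ − a_j⟩ : ℓ ∈ S(x), j ∈ {1,...,n}} ≥ φ(Ā) · √(2(f(Ax) − f(y*))). -/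
open scoped RealInnerProductSpace BigOperators

/-- `φ(A, x) = sup {λ > 0 : ∃ u v ∈ Δ_{n-1}, S(u) ⊆ S(x), Au - Av = (λ/‖Ax‖) Ax}`. -/
noncomputable def phiAt {m n : ℕ} (a : Fin n → EuclideanSpace ℝ (Fin m))
    (x : Fin n → ℝ) : ℝ :=
  sSup {lam : ℝ | 0 < lam ∧ ∃ u ∈ stdSimplex ℝ (Fin n), ∃ v ∈ stdSimplex ℝ (Fin n),
    (∀ i, 0 < u i → 0 < x i) ∧
    comb a u - comb a v = (lam / ‖comb a x‖) • comb a x}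

/-- The restricted width `φ(A) = min {φ(A, x) : x ≥ 0, Ax ≠ 0}`. -/
noncomputable def phi {m n : ℕ} (a : Fin n → EuclideanSpace ℝ (Fin m)) : ℝ :=
  sInf {t : ℝ | ∃ x : Fin n → ℝ, (∀ i, 0 ≤ x i) ∧ comb a x ≠ 0 ∧ t = phiAt a x}

/-!
Let `g = ∇f(Ax)` and let `y` be any point with `f y ≤ f (Ax)`. Strong convexity relative to `R`
and AM-GM give
`⟪g, Ax - y⟫ ≥ f (Ax) - f y + ‖R (Ax - y)‖² / 2 ≥ √(2 (f (Ax) - f y)) ‖R (Ax - y)‖`.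
On the other hand, `R` being injective, every `λ` in the supremum defining
`φ([R (a₁ - y), …, R (aₙ - y)], x)` comes with `u`, `v` in the simplex such that
`Au - Av = (λ / ‖R (Ax - y)‖) (Ax - y)`, while `⟪g, Au - Av⟫` is an average of pairwise gaps
`⟪g, a ℓ - a j⟫` with `ℓ` in the support of `x`. Combining the two bounds cancels `‖R (Ax - y)‖`.
-/

section InnerProductSpace

variable {E F : Type*} [NormedAddCommGroup E] [InnerProductSpace ℝ E]
  [NormedAddCommGroup F] [InnerProductSpace ℝ F]

lemma injective_of_forall_inner_pos {R : E →ₗ[ℝ] E} (hR : ∀ v, v ≠ 0 → 0 < ⟪v, R v⟫) :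
    Function.Injective R :=
  (injective_iff_map_eq_zero R).2 fun v hv => by_contra fun hne => by
    simpa [hv] using hR v hne

/-- `g` is a subgradient of `f` at `w` that certifies `1`-strong convexity there, measured in the
seminorm `z ↦ ‖R z‖`. For a differentiable `f` which is strongly convex relative to `R`, this is
`g = ∇f(w)`. -/
def IsStrongSubgradientAt (R : E →ₗ[ℝ] F) (f : E → ℝ) (g w : E) : Prop :=
  ∀ z, f w + ⟪g, z - w⟫ + 1 / 2 * ‖R (z - w)‖ ^ 2 ≤ f z

lemma isStrongSubgradientAt_quadratic {R : E →ₗ[ℝ] F} {Q : E →ₗ[ℝ] E}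
    (hQ : ∀ u v, ⟪Q u, v⟫ = ⟪R u, R v⟫) {b : E} {f : E → ℝ}
    (hf : ∀ y, f y = 1 / 2 * ⟪y, Q y⟫ + ⟪b, y⟫) (w : E) :
    IsStrongSubgradientAt R f (Q w + b) w := by
  intro z
  have hf' : ∀ y, f y = 1 / 2 * ⟪R y, R y⟫ + ⟪b, y⟫ := fun y => by
    rw [hf, real_inner_comm, hQ]
  refine le_of_eq ?_
  rw [hf', hf', ← real_inner_self_eq_norm_sq, inner_add_left, hQ]
  simp only [map_sub, inner_sub_left, inner_sub_right, real_inner_comm (R w) (R z)]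
  ring

lemma IsStrongSubgradientAt.sqrt_mul_norm_le_inner {R : E →ₗ[ℝ] F} {f : E → ℝ} {g w y : E}
    (hg : IsStrongSubgradientAt R f g w) (hy : f y ≤ f w) :
    √(2 * (f w - f y)) * ‖R (w - y)‖ ≤ ⟪g, w - y⟫ := by
  have hconv : f w - f y + 1 / 2 * ‖R (w - y)‖ ^ 2 ≤ ⟪g, w - y⟫ := by
    have := hg y
    rw [← neg_sub w y, inner_neg_right, map_neg, norm_neg] at this
    linarith
  have hamgm := two_mul_le_add_sq √(2 * (f w - f y)) ‖R (w - y)‖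
  rw [Real.sq_sqrt (by linarith)] at hamgm
  linarith

/-- The pairwise Frank-Wolfe gap in direction `g`: the largest `⟪g, a ℓ - a j⟫` with `ℓ` in the
support of `x` and `j` arbitrary. As a supremum of reals, it is `0` when `x` has no positive
entry. -/
noncomputable def pairwiseGap {ι : Type*} (a : ι → E) (g : E) (x : ι → ℝ) : ℝ :=
  sSup {t : ℝ | ∃ ℓ j : ι, 0 < x ℓ ∧ t = ⟪g, a ℓ - a j⟫}

lemma inner_sub_le_pairwiseGap {ι : Type*} [Finite ι] (a : ι → E) (g : E) {x : ι → ℝ} {ℓ : ι}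
    (hℓ : 0 < x ℓ) (j : ι) : ⟪g, a ℓ - a j⟫ ≤ pairwiseGap a g x := by
  refine le_csSup (Set.Finite.bddAbove ?_) ⟨ℓ, j, hℓ, rfl⟩
  refine (Set.finite_range fun p : ι × ι => ⟪g, a p.1 - a p.2⟫).subset ?_
  rintro _ ⟨k, i, -, rfl⟩
  exact ⟨(k, i), rfl⟩

lemma pairwiseGap_nonneg {ι : Type*} [Finite ι] (a : ι → E) (g : E) (x : ι → ℝ) :
    0 ≤ pairwiseGap a g x := by
  by_cases hx : ∃ ℓ, 0 < x ℓ
  · obtain ⟨ℓ, hℓ⟩ := hx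
    simpa only [sub_self, inner_zero_right] using inner_sub_le_pairwiseGap a g hℓ ℓ
  · exact Real.sSup_nonneg fun _ ⟨ℓ, _, hℓ, _⟩ => (hx ⟨ℓ, hℓ⟩).elim

end InnerProductSpace

section RestrictedWidth

variable {m n p : ℕ} {a : Fin n → EuclideanSpace ℝ (Fin m)} {x u v : Fin n → ℝ}
  {g y : EuclideanSpace ℝ (Fin m)}
  {R : EuclideanSpace ℝ (Fin m) →ₗ[ℝ] EuclideanSpace ℝ (Fin p)}

lemma comb_map_sub (hu : ∑ i, u i = 1) :
    comb (fun i => R (a i - y)) u = R (comb a u - y) := by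
  simp only [comb, map_sub, smul_sub, Finset.sum_sub_distrib, ← Finset.sum_smul, hu, one_smul,
    map_sum, map_smul]

lemma inner_comb_le {M : ℝ} (hu : u ∈ stdSimplex ℝ (Fin n))
    (hM : ∀ i, 0 < u i → ⟪g, a i⟫ ≤ M) : ⟪g, comb a u⟫ ≤ M :=
  calc ⟪g, comb a u⟫ = ∑ i, u i * ⟪g, a i⟫ := by
        simp only [comb, inner_sum, inner_smul_right]
    _ ≤ ∑ i, u i * M := Finset.sum_le_sum fun i _ => by
        rcases (hu.1 i).eq_or_lt with hi | hi
        · simp only [← hi, zero_mul, le_refl]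
        · exact mul_le_mul_of_nonneg_left (hM i hi) hi.le
    _ = M := by rw [← Finset.sum_mul, hu.2, one_mul]

variable (a g) in
lemma inner_comb_sub_comb_le_pairwiseGap (hu : u ∈ stdSimplex ℝ (Fin n))
    (hv : v ∈ stdSimplex ℝ (Fin n)) (hux : ∀ i, 0 < u i → 0 < x i) :
    ⟪g, comb a u - comb a v⟫ ≤ pairwiseGap a g x := by
  have hvertex : ∀ ℓ, 0 < x ℓ → ⟪g, a ℓ⟫ ≤ pairwiseGap a g x + ⟪g, comb a v⟫ := by
    intro ℓ hℓ
    have hneg : ⟪-g, comb a v⟫ ≤ pairwiseGap a g x - ⟪g, a ℓ⟫ := by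
      refine inner_comb_le hv fun j _ => ?_
      have hgap := inner_sub_le_pairwiseGap a g hℓ j
      rw [inner_sub_right] at hgap
      rw [inner_neg_left]
      linarith
    rw [inner_neg_left] at hneg
    linarith
  rw [inner_sub_right, sub_le_iff_le_add]
  exact inner_comb_le hu fun i hi => hvertex i (hux i hi)

variable (a x) in
lemma phiAt_nonneg : 0 ≤ phiAt a x :=
  Real.sSup_nonneg fun _ h => h.1.le

lemma phi_le_phiAt (hx : ∀ i, 0 ≤ x i) (hne : comb a x ≠ 0) : phi a ≤ phiAt a x := by
  refine csInf_le ⟨0, ?_⟩ ⟨x, hx, hne, rfl⟩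
  rintro _ ⟨z, -, -, rfl⟩
  exact phiAt_nonneg a z

lemma comb_sub_comb_eq_smul_of_injective (hR : Function.Injective R) (hx : ∑ i, x i = 1)
    (hu : ∑ i, u i = 1) (hv : ∑ i, v i = 1) {c : ℝ}
    (h : comb (fun i => R (a i - y)) u - comb (fun i => R (a i - y)) v =
      c • comb (fun i => R (a i - y)) x) :
    comb a u - comb a v = c • (comb a x - y) := by
  rw [comb_map_sub hu, comb_map_sub hv, comb_map_sub hx, ← map_sub,
    sub_sub_sub_cancel_right, ← map_smul] at h
  exact hR h

lemma phiAt_mul_inner_le_pairwiseGap_mul_norm (hR : Function.Injective R)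
    (hx : ∑ i, x i = 1) :
    phiAt (fun i => R (a i - y)) x * ⟪g, comb a x - y⟫ ≤
      pairwiseGap a g x * ‖R (comb a x - y)‖ := by
  have hgap : 0 ≤ pairwiseGap a g x * ‖R (comb a x - y)‖ :=
    mul_nonneg (pairwiseGap_nonneg a g x) (norm_nonneg _)
  rcases le_or_gt ⟪g, comb a x - y⟫ 0 with hle | hpos
  · exact (mul_nonpos_of_nonneg_of_nonpos (phiAt_nonneg _ x) hle).trans hgap
  have hnorm : 0 < ‖R (comb a x - y)‖ := by
    rw [norm_pos_iff, map_ne_zero_iff R hR]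
    exact fun h => hpos.ne' (by rw [h, inner_zero_right])
  rw [← le_div_iff₀ hpos]
  refine Real.sSup_le ?_ (div_nonneg hgap hpos.le)
  rintro c ⟨-, u, hu, v, hv, hux, huv⟩
  have hinner := inner_comb_sub_comb_le_pairwiseGap a g hu hv hux
  rwa [comb_sub_comb_eq_smul_of_injective hR hx hu.2 hv.2 huv, comb_map_sub hx,
    inner_smul_right, div_mul_eq_mul_div, div_le_iff₀ hnorm, ← le_div_iff₀ hpos] at hinner

theorem stmt11_general {f : EuclideanSpace ℝ (Fin m) → ℝ} (hR : Function.Injective R)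
    (hx : x ∈ stdSimplex ℝ (Fin n)) (hg : IsStrongSubgradientAt R f g (comb a x)) :
    phi (fun i => R (a i - y)) * √(2 * (f (comb a x) - f y)) ≤ pairwiseGap a g x := by
  rcases le_or_gt (f (comb a x)) (f y) with hle | hlt
  · rw [Real.sqrt_eq_zero_of_nonpos (by linarith), mul_zero]
    exact pairwiseGap_nonneg a g x
  have hne : R (comb a x - y) ≠ 0 := by
    rw [map_ne_zero_iff R hR, sub_ne_zero]
    exact fun h => hlt.ne' (congrArg f h)
  have hphi : phi (fun i => R (a i - y)) ≤ phiAt (fun i => R (a i - y)) x :=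
    phi_le_phiAt hx.1 (by rwa [comb_map_sub hx.2])
  refine le_of_mul_le_mul_right ?_ (norm_pos_iff.2 hne)
  calc phi (fun i => R (a i - y)) * √(2 * (f (comb a x) - f y)) * ‖R (comb a x - y)‖
      = phi (fun i => R (a i - y)) * (√(2 * (f (comb a x) - f y)) * ‖R (comb a x - y)‖) :=
        mul_assoc _ _ _
    _ ≤ phiAt (fun i => R (a i - y)) x * ⟪g, comb a x - y⟫ :=
        mul_le_mul hphi (hg.sqrt_mul_norm_le_inner hlt.le) (by positivity) (phiAt_nonneg _ x)
    _ ≤ pairwiseGap a g x * ‖R (comb a x - y)‖ :=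
        phiAt_mul_inner_le_pairwiseGap_mul_norm hR hx.2

end RestrictedWidth

/-- with `y* = Ax*` a minimizer of `f` over `conv(A)`,
`Ā = Q^{1/2}[a₁ - y*, …, aₙ - y*]`, for every `x ∈ Δ_{n-1}`:
`max {⟪∇f(Ax), a ℓ - a j⟫ : ℓ ∈ S(x), j} ≥ φ(Ā)·√(2(f(Ax) - f(y*)))`. -/
theorem stmt11 (m n : ℕ) (hn : 0 < n) (a : Fin n → EuclideanSpace ℝ (Fin m))
    (hA : ∃ i, a i ≠ 0)
    (Q : EuclideanSpace ℝ (Fin m) →ₗ[ℝ] EuclideanSpace ℝ (Fin m))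
    (hsymm : ∀ u v : EuclideanSpace ℝ (Fin m), ⟪Q u, v⟫ = ⟪u, Q v⟫)
    (hpd : ∀ v : EuclideanSpace ℝ (Fin m), v ≠ 0 → 0 < ⟪v, Q v⟫)
    (b : EuclideanSpace ℝ (Fin m)) (f : EuclideanSpace ℝ (Fin m) → ℝ)
    (hf : ∀ y, f y = 1 / 2 * ⟪y, Q y⟫ + ⟪b, y⟫)
    -- `R = Q^{1/2}`, the symmetric positive definite square root of `Q`
    (R : EuclideanSpace ℝ (Fin m) →ₗ[ℝ] EuclideanSpace ℝ (Fin m))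
    (hRsymm : ∀ u v : EuclideanSpace ℝ (Fin m), ⟪R u, v⟫ = ⟪u, R v⟫)
    (hRpd : ∀ v : EuclideanSpace ℝ (Fin m), v ≠ 0 → 0 < ⟪v, R v⟫)
    (hRsq : ∀ v, R (R v) = Q v)
    (xstar : Fin n → ℝ) (hxstar : xstar ∈ stdSimplex ℝ (Fin n))
    (hmin : ∀ x ∈ stdSimplex ℝ (Fin n), f (comb a xstar) ≤ f (comb a x))
    (ystar : EuclideanSpace ℝ (Fin m)) (hystar : ystar = comb a xstar)
    (abar : Fin n → EuclideanSpace ℝ (Fin m)) (habar : ∀ i, abar i = R (a i - ystar)) :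
    ∀ x ∈ stdSimplex ℝ (Fin n),
      phi abar * Real.sqrt (2 * (f (comb a x) - f ystar)) ≤
        sSup {t : ℝ | ∃ ℓ j : Fin n, 0 < x ℓ ∧
          t = ⟪Q (comb a x) + b, a ℓ - a j⟫} := by
  obtain rfl : abar = fun i => R (a i - ystar) := funext habar
  have hQ : ∀ u v, ⟪Q u, v⟫ = ⟪R u, R v⟫ := fun u v => by rw [← hRsq, hRsymm]
  exact fun x hx => stmt11_general (injective_of_forall_inner_pos hRpd) hx
    (isStrongSubgradientAt_quadratic hQ hf (comb a x))
end
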